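/- Let F_12, F_13, F_23 be 3×3 complex matrices, each of rank 2. Let e_21, e_12, e_31, e_13, e_32, e_23 ∈ ℂ³ be nonzero vectors with F_12.mulVec e_21 = 0, (F_12)ᵀ.mulVec e_12 = 0, F_13.mulVec e_31 = 0, (F_13)ᵀ.mulVec e_13 = 0, F_23.mulVec e_32 = 0, (F_23)ᵀ.mulVec e_23 = 0. Assume the noncollinearity conditions: e_12 and e_13 are linearly independent, e_21 and e_23 are linearly independent, and e_31 and e_32 are linearly independent. Then the following are equivalent: (a) e_13 ⬝ᵥ (F_12.mulVec e_23) = 0 and e_12 ⬝ᵥ (F_13.mulVec e_32) = 0 and e_21 ⬝ᵥ (F_23.mulVec e_31) = 0; (b) there exist invertible upper-triangular matrices K_1, K_2, K_3 ∈ Matrix (Fin 3) (Fin 3) ℂ, complex rotations R_1, R_2, R_3, vectors c_1, c_2, c_3 ∈ ℂ³, and nonzero scalars λ_12, λ_13, λ_23 ∈ ℂ such that F_ij = λ_ij • ((K_i)⁻ᵀ * R_i * [c_j − c_i]_× * (R_j)ᵀ * (K_j)⁻¹) for each pair (i,j) ∈ {(1,2),(1,3),(2,3)}. -/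

import Mathlib

open Matrix

/-- The skew-symmetric "hat" matrix `[c]ₓ` of `c ∈ ℂ³`, so that `[c]ₓ v = c × v`. -/
def crossMat (c : Fin 3 → ℂ) : Matrix (Fin 3) (Fin 3) ℂ :=
  !![0, -c 2, c 1; c 2, 0, -c 0; -c 1, c 0, 0]

/-!
Write `B i = (R i)ᵀ * (K i)⁻¹` for the matrix back-projecting the image points of camera `i`, so
that `F_ij` is `(B i)ᵀ * [c j - c i]ₓ * B j` up to scale. Then `B i` maps the epipole `e_ij` to a
multiple of the baseline `c j - c i`, and the triangulation conditions hold because the three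
baselines are coplanar. Conversely, the triangulation conditions allow completing the two epipoles
in each image to a basis by a vector `u_i` such that `u_iᵀ F_ij u_j = 0`. In these bases each `F_ij`
has only two nonzero entries, and matching them gives invertible `B i` and centers `c i`. A change
`G` of the world frame replaces `B i` by `G⁻¹ * B i`, and for a generic `G` every
`(G⁻¹ * B i)⁻¹ = (B i)⁻¹ * G` has an RQ decomposition `K i * R i`, obtained from an upper triangular
Cholesky factorization over `ℂ`.
-/

section LinearAlgebra

theorem linearIndependent_triple_swap {k V : Type*} [Semiring k] [AddCommMonoid V]
    [Module k V] {u e f : V} (h : LinearIndependent k ![u, e, f]) :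
    LinearIndependent k ![u, f, e] := by
  have hperm : ![u, f, e] = ![u, e, f] ∘ ![0, 2, 1] := by
    ext i
    fin_cases i <;> rfl
  exact hperm ▸ h.comp _ (by decide)

variable {k : Type*} [Field k]

theorem mulVec_ne_zero_of_linearIndependent {m n : Type*} [Fintype n] {F : Matrix m n k}
    (hF : Fintype.card n < F.rank + 2) {e f : n → k} (he : F *ᵥ e = 0)
    (hef : LinearIndependent k ![e, f]) : F *ᵥ f ≠ 0 := by
  intro hf
  have hspan : Submodule.span k (Set.range ![e, f]) ≤ LinearMap.ker F.mulVecLin := by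
    rw [Submodule.span_le, Set.range_subset_iff, Fin.forall_fin_two]
    exact ⟨he, hf⟩
  have hker := Submodule.finrank_mono hspan
  rw [finrank_span_eq_card hef, Fintype.card_fin] at hker
  have hnullity := LinearMap.finrank_range_add_finrank_ker F.mulVecLin
  rw [Module.finrank_fintype_fun_eq_card] at hnullity
  change F.rank + _ = _ at hnullity
  omega

theorem linearIndependent_cons_add {V : Type*} [AddCommGroup V] [Module k V] {d : ℕ}
    {v : Fin d → V} {u w : V} (hw : w ∈ Submodule.span k (Set.range v))
    (hu : LinearIndependent k (Fin.cons u v : Fin (d + 1) → V)) :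
    LinearIndependent k (Fin.cons (u + w) v : Fin (d + 1) → V) := by
  rw [linearIndependent_finCons] at hu ⊢
  rwa [Submodule.add_mem_iff_left _ hw]

theorem linearIndependent_triple_of_dotProduct_cross_ne_zero {u e f : Fin 3 → k}
    (h : u ⬝ᵥ e ⨯₃ f ≠ 0) : LinearIndependent k ![u, e, f] :=
  linearIndependent_rows_of_det_ne_zero (A := ![u, e, f]) (triple_product_eq_det u e f ▸ h)

variable {n : Type*} [Fintype n]

theorem eq_zero_of_forall_dotProduct_eq_zero {v : n → n → k} (hv : LinearIndependent k v)
    {w : n → k} (hw : ∀ i, v i ⬝ᵥ w = 0) : w = 0 := by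
  classical
  have hunit : IsUnit (of v) := linearIndependent_rows_iff_isUnit.1 hv
  exact mulVec_injective_of_isUnit hunit (by rw [mulVec_zero]; exact funext hw)

theorem eq_of_forall_dotProduct_mulVec_eq {u v : n → n → k} (hu : LinearIndependent k u)
    (hv : LinearIndependent k v) {F G : Matrix n n k}
    (h : ∀ i j, u i ⬝ᵥ F *ᵥ v j = u i ⬝ᵥ G *ᵥ v j) : F = G := by
  classical
  have hU : IsUnit (of u) := linearIndependent_rows_iff_isUnit.1 hu
  have hV : IsUnit (of v)ᵀ := (isUnit_transpose _).2 (linearIndependent_rows_iff_isUnit.1 hv)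
  have hUV : of u * (F * (of v)ᵀ) = of u * (G * (of v)ᵀ) := Matrix.ext h
  exact hV.mul_right_cancel (hU.mul_left_cancel hUV)

theorem exists_isUnit_forall_mulVec_eq [DecidableEq n] {u v : n → n → k}
    (hu : LinearIndependent k u) (hv : LinearIndependent k v) :
    ∃ B : Matrix n n k, IsUnit B ∧ ∀ i, B *ᵥ u i = v i := by
  have hU : IsUnit (of u) := linearIndependent_rows_iff_isUnit.1 hu
  have hV : IsUnit (of v) := linearIndependent_rows_iff_isUnit.1 hv
  refine ⟨((of u)⁻¹ * of v)ᵀ, (isUnit_transpose _).2 ((isUnit_nonsing_inv_iff.2 hU).mul hV),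
    fun i ↦ ?_⟩
  have hUV : of u * ((of u)⁻¹ * of v) = of v :=
    mul_nonsing_inv_cancel_left _ _ ((isUnit_iff_isUnit_det _).1 hU)
  rw [mulVec_transpose]
  exact congrFun hUV i

theorem exists_isUnit_mulVec_eq_triple {u e f u' e' f' : Fin 3 → k}
    (h : LinearIndependent k ![u, e, f]) (h' : LinearIndependent k ![u', e', f']) :
    ∃ B : Matrix (Fin 3) (Fin 3) k, IsUnit B ∧ B *ᵥ u = u' ∧ B *ᵥ e = e' ∧ B *ᵥ f = f' := by
  obtain ⟨B, hB, hBmap⟩ := exists_isUnit_forall_mulVec_eq h h'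
  exact ⟨B, hB, hBmap 0, hBmap 1, hBmap 2⟩

end LinearAlgebra

theorem crossMat_mulVec (c v : Fin 3 → ℂ) : crossMat c *ᵥ v = c ⨯₃ v := by
  ext i
  fin_cases i <;> simp [crossMat, cross_apply, mulVec, dotProduct, Fin.sum_univ_three] <;> ring

theorem crossMat_zero : crossMat 0 = 0 := by
  ext i j
  fin_cases i <;> fin_cases j <;> simp [crossMat]

theorem crossMat_transpose (c : Fin 3 → ℂ) : (crossMat c)ᵀ = -crossMat c := by
  ext i j
  fin_cases i <;> fin_cases j <;> simp [crossMat]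

theorem transpose_mul_crossMat_mulVec_mul (M : Matrix (Fin 3) (Fin 3) ℂ) (v : Fin 3 → ℂ) :
    Mᵀ * crossMat (M *ᵥ v) * M = M.det • crossMat v := by
  ext i j
  fin_cases i <;> fin_cases j <;>
    simp [crossMat, mul_apply, Fin.sum_univ_three, mulVec, dotProduct, det_fin_three] <;> ring

theorem exists_eq_smul_of_cross_eq_zero {k : Type*} [Field k] {c v : Fin 3 → k} (hc : c ≠ 0)
    (h : c ⨯₃ v = 0) : ∃ s : k, v = s • c := by
  by_contra! hne
  exact crossProduct_ne_zero_iff_linearIndependent.2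
    ((LinearIndependent.pair_iff' hc).2 fun s ↦ (hne s).symm) h

/-- `F` has rank 2, `e` lies in its left kernel and `e'` in its right kernel, as do the epipoles
`e_ij` and `e_ji` of a fundamental matrix `F_ij`. The zero vector is not excluded. -/
structure IsEpipolePair {k : Type*} [Field k] (F : Matrix (Fin 3) (Fin 3) k)
    (e e' : Fin 3 → k) : Prop where
  rank_eq : F.rank = 2
  transpose_mulVec_eq_zero : Fᵀ *ᵥ e = 0
  mulVec_eq_zero : F *ᵥ e' = 0

namespace IsEpipolePair

variable {k : Type*} [Field k] {F : Matrix (Fin 3) (Fin 3) k} {e e' f f' u u' : Fin 3 → k}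

theorem transpose (h : IsEpipolePair F e e') : IsEpipolePair Fᵀ e' e :=
  ⟨F.rank_transpose.trans h.rank_eq, h.mulVec_eq_zero, h.transpose_mulVec_eq_zero⟩

theorem ne_zero (h : IsEpipolePair F e e') : F ≠ 0 := by
  rintro rfl
  simpa using h.rank_eq

theorem dotProduct_mulVec_left (h : IsEpipolePair F e e') (y : Fin 3 → k) : e ⬝ᵥ F *ᵥ y = 0 := by
  rw [← dotProduct_transpose_mulVec, h.transpose_mulVec_eq_zero, dotProduct_zero]

theorem dotProduct_mulVec_ne_zero (h : IsEpipolePair F e e')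
    (hu : LinearIndependent k ![u, e, f]) (hef' : LinearIndependent k ![e', f'])
    (hff' : f ⬝ᵥ F *ᵥ f' = 0) : u ⬝ᵥ F *ᵥ f' ≠ 0 := by
  intro huf'
  refine mulVec_ne_zero_of_linearIndependent (by simp [h.rank_eq]) h.mulVec_eq_zero hef' ?_
  refine eq_zero_of_forall_dotProduct_eq_zero hu fun i ↦ ?_
  fin_cases i
  exacts [huf', h.dotProduct_mulVec_left f', hff']

theorem exists_dotProduct_mulVec_add_smul_eq_zero (h : IsEpipolePair F e e')
    (hu : LinearIndependent k ![u, e, f]) (hef' : LinearIndependent k ![e', f'])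
    (hff' : f ⬝ᵥ F *ᵥ f' = 0) (v : Fin 3 → k) : ∃ t : k, u ⬝ᵥ F *ᵥ (v + t • f') = 0 := by
  have huf' := h.dotProduct_mulVec_ne_zero hu hef' hff'
  refine ⟨-(u ⬝ᵥ F *ᵥ v) / (u ⬝ᵥ F *ᵥ f'), ?_⟩
  rw [mulVec_add, mulVec_smul, dotProduct_add, dotProduct_smul, smul_eq_mul,
    div_mul_cancel₀ _ huf', add_neg_cancel]

theorem exists_dotProduct_mulVec_eq_mul (h : IsEpipolePair F e e')
    (hu : LinearIndependent k ![u, e, f]) (hu' : LinearIndependent k ![u', e', f'])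
    (hff' : f ⬝ᵥ F *ᵥ f' = 0) :
    f ⬝ᵥ F *ᵥ u' ≠ 0 ∧ ∃ s : k, s ≠ 0 ∧ u ⬝ᵥ F *ᵥ f' = (f ⬝ᵥ F *ᵥ u') * s := by
  have huf' := h.dotProduct_mulVec_ne_zero hu (linearIndependent_finCons.1 hu').1 hff'
  have hfu' : f ⬝ᵥ F *ᵥ u' ≠ 0 := by
    rw [← dotProduct_transpose_mulVec] at hff' ⊢
    exact h.transpose.dotProduct_mulVec_ne_zero hu' (linearIndependent_finCons.1 hu).1 hff'
  exact ⟨hfu', _, div_ne_zero huf' hfu', (mul_div_cancel₀ _ hfu').symm⟩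

end IsEpipolePair

theorem exists_isotropic_completion {k : Type*} [Field k] {F12 F13 F23 : Matrix (Fin 3) (Fin 3) k}
    {e21 e12 e31 e13 e32 e23 : Fin 3 → k}
    (h12 : IsEpipolePair F12 e12 e21) (h13 : IsEpipolePair F13 e13 e31)
    (h23 : IsEpipolePair F23 e23 e32) (hli1 : LinearIndependent k ![e12, e13])
    (hli2 : LinearIndependent k ![e21, e23]) (hli3 : LinearIndependent k ![e31, e32])
    (t12 : e13 ⬝ᵥ F12 *ᵥ e23 = 0) (t13 : e12 ⬝ᵥ F13 *ᵥ e32 = 0)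
    (t23 : e21 ⬝ᵥ F23 *ᵥ e31 = 0) :
    ∃ u1 u2 u3 : Fin 3 → k, LinearIndependent k ![u1, e12, e13] ∧
      LinearIndependent k ![u2, e21, e23] ∧ LinearIndependent k ![u3, e31, e32] ∧
      u1 ⬝ᵥ F12 *ᵥ u2 = 0 ∧ u1 ⬝ᵥ F13 *ᵥ u3 = 0 ∧ u2 ⬝ᵥ F23 *ᵥ u3 = 0 := by
  have hdim : 2 < Module.finrank k (Fin 3 → k) := by simp
  obtain ⟨u1, hu1⟩ := exists_linearIndependent_cons_of_lt_finrank hli1 hdim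
  obtain ⟨v2, hv2⟩ := exists_linearIndependent_cons_of_lt_finrank hli2 hdim
  obtain ⟨v3, hv3⟩ := exists_linearIndependent_cons_of_lt_finrank hli3 hdim
  obtain ⟨t, ht⟩ := h12.exists_dotProduct_mulVec_add_smul_eq_zero hu1 hli2 t12 v2
  have hu2 : LinearIndependent k ![v2 + t • e23, e21, e23] :=
    linearIndependent_cons_add (Submodule.smul_mem _ _ (Submodule.subset_span ⟨1, rfl⟩)) hv2
  -- Adding multiples of `e31` to `u3` does not affect `u1ᵀ F13 u3`, and adding multiples of `e32`
  -- does not affect `u2ᵀ F23 u3`, so the two conditions on `u3` can be solved independently.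
  obtain ⟨a, ha⟩ := h13.exists_dotProduct_mulVec_add_smul_eq_zero
    (linearIndependent_triple_swap hu1) hli3 t13 v3
  obtain ⟨b, hb⟩ := h23.exists_dotProduct_mulVec_add_smul_eq_zero
    (linearIndependent_triple_swap hu2) (LinearIndependent.pair_symm_iff.1 hli3) t23 v3
  have hu3 : LinearIndependent k ![v3 + (a • e32 + b • e31), e31, e32] :=
    linearIndependent_cons_add (Submodule.add_mem _
      (Submodule.smul_mem _ _ (Submodule.subset_span ⟨1, rfl⟩))
      (Submodule.smul_mem _ _ (Submodule.subset_span ⟨0, rfl⟩))) hv3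
  refine ⟨u1, v2 + t • e23, v3 + (a • e32 + b • e31), hu1, hu2, hu3, ht, ?_, ?_⟩
  · rw [← add_assoc, mulVec_add, mulVec_smul, h13.mulVec_eq_zero, smul_zero, add_zero, ha]
  · rw [add_left_comm, mulVec_add, mulVec_smul, h23.mulVec_eq_zero, smul_zero, zero_add, hb]

/-- Up to scale, `F` is the fundamental matrix of two cameras whose baseline is `c` and which
back-project image points `x` and `y` in the directions `B x` and `B' y`. -/
def IsFundamental (B B' : Matrix (Fin 3) (Fin 3) ℂ) (c : Fin 3 → ℂ)
    (F : Matrix (Fin 3) (Fin 3) ℂ) : Prop :=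
  ∃ l : ℂ, l ≠ 0 ∧ F = l • (Bᵀ * crossMat c * B')

theorem dotProduct_transpose_mul_crossMat_mul_mulVec (B B' : Matrix (Fin 3) (Fin 3) ℂ)
    (c x y : Fin 3 → ℂ) :
    x ⬝ᵥ (Bᵀ * crossMat c * B') *ᵥ y = (B *ᵥ x) ⬝ᵥ c ⨯₃ (B' *ᵥ y) := by
  rw [← mulVec_mulVec, ← mulVec_mulVec, crossMat_mulVec, dotProduct_transpose_mulVec,
    dotProduct_comm]

namespace IsFundamental

variable {B B' F : Matrix (Fin 3) (Fin 3) ℂ} {c e f f' : Fin 3 → ℂ}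

theorem transpose (h : IsFundamental B B' c F) : IsFundamental B' B c Fᵀ := by
  obtain ⟨l, hl, rfl⟩ := h
  refine ⟨-l, neg_ne_zero.2 hl, ?_⟩
  simp [crossMat_transpose, Matrix.mul_assoc]

theorem exists_mulVec_eq_smul (h : IsFundamental B B' c F) (hB : IsUnit B) (hF : F ≠ 0)
    (he : F *ᵥ e = 0) : ∃ s : ℂ, B' *ᵥ e = s • c := by
  obtain ⟨l, hl, rfl⟩ := h
  have hc : c ≠ 0 := by
    rintro rfl
    simp [crossMat_zero] at hF
  rw [smul_mulVec, smul_eq_zero_iff_right hl, ← mulVec_mulVec, ← mulVec_mulVec,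
    crossMat_mulVec] at he
  refine exists_eq_smul_of_cross_eq_zero hc ?_
  exact mulVec_injective_of_isUnit ((isUnit_transpose _).2 hB) (he.trans (mulVec_zero _).symm)

theorem exists_mulVec_eq_smul' (h : IsFundamental B B' c F) (hB' : IsUnit B') (hF : F ≠ 0)
    (he : Fᵀ *ᵥ e = 0) : ∃ s : ℂ, B *ᵥ e = s • c :=
  h.transpose.exists_mulVec_eq_smul hB' (transpose_eq_zero.not.2 hF) he

theorem dotProduct_mulVec_eq_zero (h : IsFundamental B B' c F) {a b : Fin 3 → ℂ}
    (hf : ∃ s : ℂ, B *ᵥ f = s • a) (hf' : ∃ s : ℂ, B' *ᵥ f' = s • b) (hacb : a ⬝ᵥ c ⨯₃ b = 0) :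
    f ⬝ᵥ F *ᵥ f' = 0 := by
  obtain ⟨l, -, rfl⟩ := h
  obtain ⟨s, hs⟩ := hf
  obtain ⟨s', hs'⟩ := hf'
  rw [smul_mulVec, dotProduct_smul, dotProduct_transpose_mul_crossMat_mul_mulVec, hs, hs',
    map_smul, smul_dotProduct, dotProduct_smul, hacb, smul_zero, smul_zero, smul_zero]

end IsFundamental

theorem IsEpipolePair.eq_smul_of_dotProduct_eq {F B B' : Matrix (Fin 3) (Fin 3) ℂ}
    {c e e' f f' u u' : Fin 3 → ℂ} {l s s' : ℂ} (h : IsEpipolePair F e e')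
    (hu : LinearIndependent ℂ ![u, e, f]) (hu' : LinearIndependent ℂ ![u', e', f'])
    (he : B *ᵥ e = s • c) (he' : B' *ᵥ e' = s' • c)
    (huu' : u ⬝ᵥ F *ᵥ u' = l * ((B *ᵥ u) ⬝ᵥ c ⨯₃ (B' *ᵥ u')))
    (huf' : u ⬝ᵥ F *ᵥ f' = l * ((B *ᵥ u) ⬝ᵥ c ⨯₃ (B' *ᵥ f')))
    (hfu' : f ⬝ᵥ F *ᵥ u' = l * ((B *ᵥ f) ⬝ᵥ c ⨯₃ (B' *ᵥ u')))
    (hff' : f ⬝ᵥ F *ᵥ f' = l * ((B *ᵥ f) ⬝ᵥ c ⨯₃ (B' *ᵥ f'))) :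
    F = l • (Bᵀ * crossMat c * B') := by
  refine eq_of_forall_dotProduct_mulVec_eq hu hu' fun i j ↦ ?_
  rw [smul_mulVec, dotProduct_smul, dotProduct_transpose_mul_crossMat_mul_mulVec, smul_eq_mul]
  fin_cases i <;> fin_cases j <;>
    simp [h.dotProduct_mulVec_left, h.mulVec_eq_zero, he, he', huu', huf', hfu', hff']

section TrailingMinors

/-- The product of the trailing principal minors of `S`. Its nonvanishing is a polynomial condition
under which a symmetric matrix is `K * Kᵀ` with `K` upper triangular. -/
def trailingMinorProd {R : Type*} [CommRing R] : {n : ℕ} → Matrix (Fin n) (Fin n) R → R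
  | 0, _ => 1
  | _ + 1, S => S.det * trailingMinorProd (S.submatrix Fin.succ Fin.succ)

theorem map_trailingMinorProd {R T : Type*} [CommRing R] [CommRing T] (f : R →+* T) {n : ℕ}
    (S : Matrix (Fin n) (Fin n) R) :
    f (trailingMinorProd S) = trailingMinorProd (S.map f) := by
  induction n with
  | zero => exact map_one f
  | succ n ih => simp only [trailingMinorProd, map_mul, ih, RingHom.map_det,
      RingHom.mapMatrix_apply, submatrix_map]

theorem trailingMinorProd_one {R : Type*} [CommRing R] (n : ℕ) :
    trailingMinorProd (1 : Matrix (Fin n) (Fin n) R) = 1 := by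
  induction n with
  | zero => rfl
  | succ n ih =>
    rw [trailingMinorProd, det_one, one_mul, submatrix_one _ (Fin.succ_injective n), ih]

theorem det_ne_zero_of_trailingMinorProd_ne_zero {R : Type*} [CommRing R] [Nontrivial R] {n : ℕ}
    {S : Matrix (Fin n) (Fin n) R} (hS : trailingMinorProd S ≠ 0) : S.det ≠ 0 := by
  cases n with
  | zero => simp
  | succ n => exact left_ne_zero_of_mul hS

theorem isUnit_det_of_trailingMinorProd_mul_transpose_ne_zero {k : Type*} [Field k] {n : ℕ}
    {K : Matrix (Fin n) (Fin n) k} (hK : trailingMinorProd (K * Kᵀ) ≠ 0) : IsUnit K.det := by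
  have hdet := det_ne_zero_of_trailingMinorProd_ne_zero hK
  rw [det_mul] at hdet
  exact (left_ne_zero_of_mul hdet).isUnit

end TrailingMinors

/-- The factors of a calibrated camera in any dimension: `K` is the calibration matrix, i.e.
invertible and upper triangular, and `R` is a rotation. A camera `K R [I | -c]` back-projects the
image point `x` to the ray from `c` in the direction `Rᵀ K⁻¹ x`. -/
structure IsCalibrated {k : Type*} [Field k] {n : ℕ} (K R : Matrix (Fin n) (Fin n) k) : Prop where
  blockTriangular : K.BlockTriangular id
  isUnit_det : IsUnit K.det
  mul_transpose : R * Rᵀ = 1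
  det_eq_one : R.det = 1

theorem IsCalibrated.isUnit_transpose_mul_inv {k : Type*} [Field k] {n : ℕ}
    {K R : Matrix (Fin n) (Fin n) k} (h : IsCalibrated K R) : IsUnit (Rᵀ * K⁻¹) := by
  rw [isUnit_iff_isUnit_det, det_mul, det_transpose, h.det_eq_one, one_mul]
  exact isUnit_nonsing_inv_det K h.isUnit_det

section Cholesky

theorem blockTriangular_cons {R : Type*} [Zero R] {n : ℕ} {K : Matrix (Fin n) (Fin n) R}
    (hK : K.BlockTriangular id) (a : R) (x : Fin n → R) :
    BlockTriangular (of (Fin.cons (Fin.cons a x) fun i ↦ Fin.cons 0 (K i)) :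
      Matrix (Fin (n + 1)) (Fin (n + 1)) R) id := by
  intro i j hij
  cases i using Fin.cases with
  | zero => exact absurd hij (Fin.not_lt_zero j)
  | succ i =>
    cases j using Fin.cases with
    | zero => rfl
    | succ j => exact hK (Fin.succ_lt_succ_iff.1 hij)

variable {k : Type*} [Field k] [IsAlgClosed k] {n : ℕ}

theorem exists_blockTriangular_mul_transpose_eq {S : Matrix (Fin n) (Fin n) k} (hsymm : S.IsSymm)
    (hS : trailingMinorProd S ≠ 0) :
    ∃ K : Matrix (Fin n) (Fin n) k, K.BlockTriangular id ∧ K * Kᵀ = S := by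
  induction n with
  | zero => exact ⟨1, blockTriangular_one, Subsingleton.elim _ _⟩
  | succ n ih =>
    set T := S.submatrix Fin.succ Fin.succ
    set b : Fin n → k := fun i ↦ S i.succ 0
    have hT : trailingMinorProd T ≠ 0 := right_ne_zero_of_mul hS
    obtain ⟨K, hK, hKT⟩ := ih (hsymm.submatrix _) hT
    have hKdet : IsUnit K.det :=
      isUnit_det_of_trailingMinorProd_mul_transpose_ne_zero (hKT ▸ hT)
    set x := K⁻¹ *ᵥ b
    have hx : K *ᵥ x = b := by rw [mulVec_mulVec, mul_nonsing_inv _ hKdet, one_mulVec]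
    obtain ⟨a, ha⟩ := IsAlgClosed.exists_eq_mul_self (S 0 0 - x ⬝ᵥ x)
    refine ⟨_, blockTriangular_cons hK a x, ?_⟩
    ext i j
    cases i using Fin.cases with
    | zero =>
      cases j using Fin.cases with
      | zero =>
        have hdiag : a * a + ∑ i, x i * x i = S 0 0 := by rw [← ha]; exact sub_add_cancel _ _
        simpa [mul_apply, Fin.sum_univ_succ] using hdiag
      | succ j =>
        rw [← hsymm.apply]
        simpa [mul_apply, Fin.sum_univ_succ, mulVec, dotProduct, b, mul_comm] using congrFun hx j
    | succ i =>
      cases j using Fin.cases with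
      | zero => simpa [mul_apply, Fin.sum_univ_succ, mulVec, dotProduct, b] using congrFun hx i
      | succ j =>
        simpa [mul_apply, Fin.sum_univ_succ, T] using congrFun (congrFun hKT i) j

theorem exists_orthogonal_eq_mul {A : Matrix (Fin n) (Fin n) k}
    (hA : trailingMinorProd (A * Aᵀ) ≠ 0) :
    ∃ K R : Matrix (Fin n) (Fin n) k,
      K.BlockTriangular id ∧ IsUnit K.det ∧ R * Rᵀ = 1 ∧ A = K * R := by
  obtain ⟨K, hK, hKA⟩ := exists_blockTriangular_mul_transpose_eq (isSymm_mul_transpose_self A) hA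
  have hKdet : IsUnit K.det :=
    isUnit_det_of_trailingMinorProd_mul_transpose_ne_zero (hKA ▸ hA)
  refine ⟨K, K⁻¹ * A, hK, hKdet, ?_, (mul_nonsing_inv_cancel_left _ _ hKdet).symm⟩
  calc K⁻¹ * A * (K⁻¹ * A)ᵀ = K⁻¹ * (A * Aᵀ) * K⁻¹ᵀ := by
        simp only [transpose_mul, Matrix.mul_assoc]
    _ = (K⁻¹ * K) * (K⁻¹ * K)ᵀ := by rw [← hKA]; simp only [transpose_mul, Matrix.mul_assoc]
    _ = 1 := by rw [nonsing_inv_mul _ hKdet, transpose_one, Matrix.one_mul]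

theorem exists_isCalibrated_eq_mul {A : Matrix (Fin (n + 1)) (Fin (n + 1)) k}
    (hA : trailingMinorProd (A * Aᵀ) ≠ 0) :
    ∃ K R : Matrix (Fin (n + 1)) (Fin (n + 1)) k, IsCalibrated K R ∧ A = K * R := by
  obtain ⟨K, R, hK, hKdet, hR, hAKR⟩ := exists_orthogonal_eq_mul hA
  have hRdet : R.det * R.det = 1 := by
    rw [← det_one (n := Fin (n + 1)), ← hR, det_mul, det_transpose]
  set D : Matrix (Fin (n + 1)) (Fin (n + 1)) k := diagonal (Fin.cons R.det 1)
  have hDdet : D.det = R.det := by simp [D, Fin.prod_univ_succ]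
  have hDD : D * D = 1 := by
    rw [diagonal_mul_diagonal, ← diagonal_one]
    congr 1
    ext i
    cases i using Fin.cases <;> simp [hRdet]
  refine ⟨K * D, D * R, ⟨hK.mul (blockTriangular_diagonal _), ?_, ?_, ?_⟩, ?_⟩
  · rw [det_mul, hDdet]
    exact hKdet.mul (.of_mul_eq_one _ hRdet)
  · calc D * R * (D * R)ᵀ = D * (R * Rᵀ) * D := by
          simp only [transpose_mul, D, diagonal_transpose, Matrix.mul_assoc]
      _ = 1 := by rw [hR, Matrix.mul_one, hDD]
  · rw [det_mul, hDdet, hRdet]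
  · rw [Matrix.mul_assoc, ← Matrix.mul_assoc D, hDD, Matrix.one_mul, hAKR]

end Cholesky

theorem exists_forall_eval_ne_zero {σ ι R : Type*} [CommRing R] [IsDomain R] [Infinite R]
    [Finite ι] {p : ι → MvPolynomial σ R} (hp : ∀ i, p i ≠ 0) :
    ∃ x : σ → R, ∀ i, MvPolynomial.eval x (p i) ≠ 0 := by
  cases nonempty_fintype ι
  have hprod : ∏ i, p i ≠ 0 := Finset.prod_ne_zero_iff.2 fun i _ ↦ hp i
  obtain ⟨x, hx⟩ : ∃ x, MvPolynomial.eval x (∏ i, p i) ≠ 0 := by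
    by_contra! h
    exact hprod (MvPolynomial.funext fun x ↦ by rw [h, map_zero])
  rw [map_prod] at hx
  exact ⟨x, fun i ↦ Finset.prod_ne_zero_iff.1 hx i (Finset.mem_univ i)⟩

theorem exists_forall_trailingMinorProd_mul_ne_zero {ι R : Type*} [CommRing R] [IsDomain R]
    [Infinite R] [Finite ι] {n : ℕ} {A : ι → Matrix (Fin n) (Fin n) R}
    (hA : ∀ i, IsUnit (A i).det) :
    ∃ G : Matrix (Fin n) (Fin n) R, ∀ i, trailingMinorProd (A i * G * (A i * G)ᵀ) ≠ 0 := by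
  let Y i := (A i).map MvPolynomial.C * mvPolynomialX (Fin n) (Fin n) R
  let p i := trailingMinorProd (Y i * (Y i)ᵀ)
  have eval_p (G : Matrix (Fin n) (Fin n) R) (i : ι) :
      MvPolynomial.eval (fun s ↦ G s.1 s.2) (p i) = trailingMinorProd (A i * G * (A i * G)ᵀ) := by
    have eval_Y : (Y i).map (MvPolynomial.eval fun s ↦ G s.1 s.2) = A i * G := by
      ext a b
      simp [Y, mul_apply, mvPolynomialX]
    rw [map_trailingMinorProd, Matrix.map_mul, transpose_map, eval_Y]
  have hp (i : ι) : p i ≠ 0 := by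
    intro h
    have eval_inv := eval_p (A i)⁻¹ i
    rw [h, map_zero, mul_nonsing_inv _ (hA i), transpose_one, Matrix.one_mul,
      trailingMinorProd_one] at eval_inv
    exact zero_ne_one eval_inv
  obtain ⟨x, hx⟩ := exists_forall_eval_ne_zero hp
  exact ⟨of fun a b ↦ x (a, b), fun i ↦ eval_p (of fun a b ↦ x (a, b)) i ▸ hx i⟩

theorem exists_forall_eq_mul_transpose_mul_inv {ι k : Type*} [Field k] [IsAlgClosed k]
    [Finite ι] {n : ℕ} {B : ι → Matrix (Fin (n + 1)) (Fin (n + 1)) k} (hB : ∀ i, IsUnit (B i)) :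
    ∃ (G : Matrix (Fin (n + 1)) (Fin (n + 1)) k)
      (K R : ι → Matrix (Fin (n + 1)) (Fin (n + 1)) k),
      (∀ i, IsCalibrated (K i) (R i)) ∧ ∀ i, B i = G * ((R i)ᵀ * (K i)⁻¹) := by
  have hBdet i : IsUnit (B i).det := (isUnit_iff_isUnit_det _).1 (hB i)
  obtain ⟨G, hG⟩ := exists_forall_trailingMinorProd_mul_ne_zero
    fun i ↦ isUnit_nonsing_inv_det _ (hBdet i)
  choose K R hKR hBG using fun i ↦ exists_isCalibrated_eq_mul (hG i)
  refine ⟨G, K, R, hKR, fun i ↦ ?_⟩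
  calc B i = B i * (K i * (R i * (R i)ᵀ) * (K i)⁻¹) := by
        rw [(hKR i).mul_transpose, Matrix.mul_one, mul_nonsing_inv _ (hKR i).isUnit_det,
          Matrix.mul_one]
    _ = B i * (K i * R i) * ((R i)ᵀ * (K i)⁻¹) := by simp only [Matrix.mul_assoc]
    _ = G * ((R i)ᵀ * (K i)⁻¹) := by
        rw [← hBG, mul_nonsing_inv_cancel_left _ _ (hBdet i)]

/-- Up to scale, the three matrices are the pairwise fundamental matrices of cameras with
back-projections `B 0`, `B 1`, `B 2` and centers `c 0`, `c 1`, `c 2`. The suffixes of `F12`, `F13`,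
`F23` number the cameras from one. -/
structure IsCompatibleTriple (B : Fin 3 → Matrix (Fin 3) (Fin 3) ℂ) (c : Fin 3 → Fin 3 → ℂ)
    (F12 F13 F23 : Matrix (Fin 3) (Fin 3) ℂ) : Prop where
  isFundamental12 : IsFundamental (B 0) (B 1) (c 1 - c 0) F12
  isFundamental13 : IsFundamental (B 0) (B 2) (c 2 - c 0) F13
  isFundamental23 : IsFundamental (B 1) (B 2) (c 2 - c 1) F23

theorem IsFundamental.of_mul_left {B B' F G : Matrix (Fin 3) (Fin 3) ℂ} {c : Fin 3 → ℂ}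
    (h : IsFundamental (G * B) (G * B') (G *ᵥ c) F) (hG : IsUnit G) : IsFundamental B B' c F := by
  obtain ⟨l, hl, rfl⟩ := h
  have hdet : G.det ≠ 0 := ((isUnit_iff_isUnit_det G).1 hG).ne_zero
  refine ⟨l * G.det, mul_ne_zero hl hdet, ?_⟩
  calc l • ((G * B)ᵀ * crossMat (G *ᵥ c) * (G * B'))
      = l • (Bᵀ * (Gᵀ * crossMat (G *ᵥ c) * G) * B') := by
        simp only [transpose_mul, Matrix.mul_assoc]
    _ = (l * G.det) • (Bᵀ * crossMat c * B') := by
        rw [transpose_mul_crossMat_mulVec_mul, Matrix.mul_smul, Matrix.smul_mul, smul_smul]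

theorem transpose_mul_crossMat_mul_backprojection (K R K' R' : Matrix (Fin 3) (Fin 3) ℂ)
    (c : Fin 3 → ℂ) :
    (Rᵀ * K⁻¹)ᵀ * crossMat c * (R'ᵀ * K'⁻¹) = K⁻¹ᵀ * R * crossMat c * R'ᵀ * K'⁻¹ := by
  simp only [transpose_mul, transpose_transpose, Matrix.mul_assoc]

section Triples

variable {F12 F13 F23 : Matrix (Fin 3) (Fin 3) ℂ}

theorem IsCompatibleTriple.exists_isCalibrated {B : Fin 3 → Matrix (Fin 3) (Fin 3) ℂ}
    {c : Fin 3 → Fin 3 → ℂ} (h : IsCompatibleTriple B c F12 F13 F23) (hB : ∀ i, IsUnit (B i)) :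
    ∃ (K R : Fin 3 → Matrix (Fin 3) (Fin 3) ℂ) (c' : Fin 3 → Fin 3 → ℂ),
      (∀ i, IsCalibrated (K i) (R i)) ∧
      IsCompatibleTriple (fun i ↦ (R i)ᵀ * (K i)⁻¹) c' F12 F13 F23 := by
  obtain ⟨G, K, R, hKR, hBG⟩ := exists_forall_eq_mul_transpose_mul_inv hB
  have hG : IsUnit G := isUnit_of_mul_isUnit_left (hBG 0 ▸ hB 0)
  have hc (i j : Fin 3) : c j - c i = G *ᵥ (G⁻¹ *ᵥ c j - G⁻¹ *ᵥ c i) := by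
    rw [← mulVec_sub, mulVec_mulVec, mul_nonsing_inv _ ((isUnit_iff_isUnit_det G).1 hG),
      one_mulVec]
  obtain ⟨h12, h13, h23⟩ := h
  rw [hBG, hBG, hc] at h12 h13 h23
  exact ⟨K, R, fun i ↦ G⁻¹ *ᵥ c i, hKR, h12.of_mul_left hG, h13.of_mul_left hG,
    h23.of_mul_left hG⟩

variable {e21 e12 e31 e13 e32 e23 : Fin 3 → ℂ}

theorem IsCompatibleTriple.triangulation {B : Fin 3 → Matrix (Fin 3) (Fin 3) ℂ}
    {c : Fin 3 → Fin 3 → ℂ} (h : IsCompatibleTriple B c F12 F13 F23) (hB : ∀ i, IsUnit (B i))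
    (h12 : IsEpipolePair F12 e12 e21) (h13 : IsEpipolePair F13 e13 e31)
    (h23 : IsEpipolePair F23 e23 e32) :
    e13 ⬝ᵥ F12 *ᵥ e23 = 0 ∧ e12 ⬝ᵥ F13 *ᵥ e32 = 0 ∧ e21 ⬝ᵥ F23 *ᵥ e31 = 0 := by
  obtain ⟨f12, f13, f23⟩ := h
  have p21 := f12.exists_mulVec_eq_smul (hB 0) h12.ne_zero h12.mulVec_eq_zero
  have p12 := f12.exists_mulVec_eq_smul' (hB 1) h12.ne_zero h12.transpose_mulVec_eq_zero
  have p31 := f13.exists_mulVec_eq_smul (hB 0) h13.ne_zero h13.mulVec_eq_zero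
  have p13 := f13.exists_mulVec_eq_smul' (hB 2) h13.ne_zero h13.transpose_mulVec_eq_zero
  have p32 := f23.exists_mulVec_eq_smul (hB 1) h23.ne_zero h23.mulVec_eq_zero
  have p23 := f23.exists_mulVec_eq_smul' (hB 2) h23.ne_zero h23.transpose_mulVec_eq_zero
  refine ⟨f12.dotProduct_mulVec_eq_zero p13 p23 ?_, f13.dotProduct_mulVec_eq_zero p12 p32 ?_,
    f23.dotProduct_mulVec_eq_zero p21 p31 ?_⟩ <;>
  simp only [cross_apply, vec3_dotProduct, Pi.sub_apply, cons_val] <;> ring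

theorem exists_isCompatibleTriple
    (h12 : IsEpipolePair F12 e12 e21) (h13 : IsEpipolePair F13 e13 e31)
    (h23 : IsEpipolePair F23 e23 e32) (hli1 : LinearIndependent ℂ ![e12, e13])
    (hli2 : LinearIndependent ℂ ![e21, e23]) (hli3 : LinearIndependent ℂ ![e31, e32])
    (t12 : e13 ⬝ᵥ F12 *ᵥ e23 = 0) (t13 : e12 ⬝ᵥ F13 *ᵥ e32 = 0)
    (t23 : e21 ⬝ᵥ F23 *ᵥ e31 = 0) :
    ∃ B c, (∀ i, IsUnit (B i)) ∧ IsCompatibleTriple B c F12 F13 F23 := by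
  obtain ⟨u1, u2, u3, hu1, hu2, hu3, hu12, hu13, hu23⟩ :=
    exists_isotropic_completion h12 h13 h23 hli1 hli2 hli3 t12 t13 t23
  have hu1' := linearIndependent_triple_swap hu1
  have hu2' := linearIndependent_triple_swap hu2
  have hu3' := linearIndependent_triple_swap hu3
  obtain ⟨hl13, s13, hs13, hs13_eq⟩ := h13.exists_dotProduct_mulVec_eq_mul hu1' hu3 t13
  obtain ⟨hl23, s23, hs23, hs23_eq⟩ := h23.exists_dotProduct_mulVec_eq_mul hu2' hu3' t23
  obtain ⟨hl12, s12, hs12, hs12_eq⟩ := h12.exists_dotProduct_mulVec_eq_mul hu1 hu2 t12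
  -- The centers are `0`, `(1, 0, 0)` and `(0, 1, 0)`: `e_ij` goes to a multiple of the baseline
  -- from `i` to `j`, and `u1`, `u2`, `u3` go to the normal of the plane of the centers.
  obtain ⟨B1, hB1, hB1u, hB1e2, hB1e3⟩ := exists_isUnit_mulVec_eq_triple hu1
    (u' := ![0, 0, 1]) (e' := ![1, 0, 0]) (f' := ![0, 1, 0])
    (linearIndependent_triple_of_dotProduct_cross_ne_zero (by simp [cross_apply]))
  obtain ⟨B2, hB2, hB2u, hB2e1, hB2e3⟩ := exists_isUnit_mulVec_eq_triple hu2
    (u' := ![0, 0, 1]) (e' := ![1, 0, 0]) (f' := s12 • ![1, -1, 0])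
    (linearIndependent_triple_of_dotProduct_cross_ne_zero (by simp [cross_apply, hs12]))
  obtain ⟨B3, hB3, hB3u, hB3e1, hB3e2⟩ := exists_isUnit_mulVec_eq_triple hu3
    (u' := ![0, 0, 1]) (e' := s23 • ![0, -1, 0]) (f' := s13 • ![-1, 1, 0])
    (linearIndependent_triple_of_dotProduct_cross_ne_zero (by simp [cross_apply, hs13, hs23]))
  refine ⟨![B1, B2, B3], ![0, ![1, 0, 0], ![0, 1, 0]],
    by simp [Fin.forall_fin_succ, hB1, hB2, hB3],
    ⟨_, neg_ne_zero.2 hl12, ?_⟩, ⟨_, hl13, ?_⟩, ⟨_, hl23, ?_⟩⟩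
  · refine h12.eq_smul_of_dotProduct_eq hu1 hu2 (s := 1) (s' := 1) ?_ ?_ ?_ ?_ ?_ ?_ <;>
      simp [cross_apply, *]
  · refine h13.eq_smul_of_dotProduct_eq hu1' hu3 (s := 1) (s' := -s23) ?_ ?_ ?_ ?_ ?_ ?_ <;>
      simp [cross_apply, *]
  · refine h23.eq_smul_of_dotProduct_eq hu2' hu3' (s := -s12) (s' := s13) ?_ ?_ ?_ ?_ ?_ ?_ <;>
      simp [cross_apply, *]

end Triples

/-- Proposition 2.1 (Hartley–Zisserman, Thm 15.6): a triple of rank-2 matrices whose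
epipoles satisfy the noncollinearity conditions is a compatible fundamental matrix
triple if and only if the three triangulation conditions hold.
Indices are 0-based: camera `i+1` of the paper is camera `i` here, and
`Matrix.BlockTriangular K id` expresses that `K` is upper triangular. -/
theorem stmt19 (F12 F13 F23 : Matrix (Fin 3) (Fin 3) ℂ)
    (h12 : F12.rank = 2) (h13 : F13.rank = 2) (h23 : F23.rank = 2)
    (e21 e12 e31 e13 e32 e23 : Fin 3 → ℂ)
    (hne21 : e21 ≠ 0) (hne12 : e12 ≠ 0) (hne31 : e31 ≠ 0)
    (hne13 : e13 ≠ 0) (hne32 : e32 ≠ 0) (hne23 : e23 ≠ 0)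
    (hk21 : F12 *ᵥ e21 = 0) (hk12 : F12ᵀ *ᵥ e12 = 0)
    (hk31 : F13 *ᵥ e31 = 0) (hk13 : F13ᵀ *ᵥ e13 = 0)
    (hk32 : F23 *ᵥ e32 = 0) (hk23 : F23ᵀ *ᵥ e23 = 0)
    (hli1 : LinearIndependent ℂ ![e12, e13])
    (hli2 : LinearIndependent ℂ ![e21, e23])
    (hli3 : LinearIndependent ℂ ![e31, e32]) :
    (e13 ⬝ᵥ (F12 *ᵥ e23) = 0 ∧ e12 ⬝ᵥ (F13 *ᵥ e32) = 0 ∧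
      e21 ⬝ᵥ (F23 *ᵥ e31) = 0) ↔
    (∃ (K R : Fin 3 → Matrix (Fin 3) (Fin 3) ℂ) (c : Fin 3 → Fin 3 → ℂ)
        (l12 l13 l23 : ℂ),
      (∀ i, (K i).BlockTriangular id) ∧ (∀ i, IsUnit (K i).det) ∧
      (∀ i, R i * (R i)ᵀ = 1) ∧ (∀ i, (R i).det = 1) ∧
      l12 ≠ 0 ∧ l13 ≠ 0 ∧ l23 ≠ 0 ∧
      F12 = l12 • (((K 0)⁻¹)ᵀ * R 0 * crossMat (c 1 - c 0) * (R 1)ᵀ * (K 1)⁻¹) ∧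
      F13 = l13 • (((K 0)⁻¹)ᵀ * R 0 * crossMat (c 2 - c 0) * (R 2)ᵀ * (K 2)⁻¹) ∧
      F23 = l23 • (((K 1)⁻¹)ᵀ * R 1 * crossMat (c 2 - c 1) * (R 2)ᵀ * (K 2)⁻¹)) := by
  constructor
  · rintro ⟨t12, t13, t23⟩
    obtain ⟨B, c₀, hB, hBc⟩ := exists_isCompatibleTriple ⟨h12, hk12, hk21⟩ ⟨h13, hk13, hk31⟩
      ⟨h23, hk23, hk32⟩ hli1 hli2 hli3 t12 t13 t23
    obtain ⟨K, R, c, hKR, ⟨l12, hl12, F12_eq⟩, ⟨l13, hl13, F13_eq⟩, ⟨l23, hl23, F23_eq⟩⟩ :=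
      hBc.exists_isCalibrated hB
    refine ⟨K, R, c, l12, l13, l23, fun i ↦ (hKR i).blockTriangular, fun i ↦ (hKR i).isUnit_det,
      fun i ↦ (hKR i).mul_transpose, fun i ↦ (hKR i).det_eq_one, hl12, hl13, hl23, ?_, ?_, ?_⟩
    all_goals rwa [← transpose_mul_crossMat_mul_backprojection]
  · rintro ⟨K, R, c, l12, l13, l23, hK, hKdet, hR, hRdet, hl12, hl13, hl23, F12_eq, F13_eq, F23_eq⟩
    rw [← transpose_mul_crossMat_mul_backprojection] at F12_eq F13_eq F23_eq
    have hF : IsCompatibleTriple (fun i ↦ (R i)ᵀ * (K i)⁻¹) c F12 F13 F23 :=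
      ⟨⟨l12, hl12, F12_eq⟩, ⟨l13, hl13, F13_eq⟩, ⟨l23, hl23, F23_eq⟩⟩
    have hKR (i : Fin 3) : IsCalibrated (K i) (R i) := ⟨hK i, hKdet i, hR i, hRdet i⟩
    exact hF.triangulation (fun i ↦ (hKR i).isUnit_transpose_mul_inv) ⟨h12, hk12, hk21⟩
      ⟨h13, hk13, hk31⟩ ⟨h23, hk23, hk32⟩
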